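/- arXiv:2302.04626 — 2 statements merged into one kernel-verified Lean document; each statement's English description precedes it below -/
import Mathlib

section
/- Let x : ℕ → ℝ satisfy 0 < x_0 ≤ 1 and x_{p+1} = ((3 − x_p)/2)² · x_p for all p. Then the sequence (x_p) is monotone nondecreasing, satisfies 0 < x_p ≤ 1 for all p, and converges to 1 as p → ∞. -/
/-- The scalar Schur–Newton iteration
`x_{p+1} = ((3 − x_p)/2)² · x_p` starting from `x₀ ∈ (0, 1]` is monotone
nondecreasing, stays in `(0, 1]`, and converges to `1`. -/
theorem scalar_schur_newton_tendsto_one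
    (x : ℕ → ℝ) (h0 : 0 < x 0) (h1 : x 0 ≤ 1)
    (hrec : ∀ p, x (p + 1) = ((3 - x p) / 2) ^ 2 * x p) :
    Monotone x ∧ (∀ p, 0 < x p ∧ x p ≤ 1) ∧
      Filter.Tendsto x Filter.atTop (nhds 1) := by
  have hmem : ∀ p, 0 < x p ∧ x p ≤ 1 := by
    intro p
    induction p with
    | zero => exact ⟨h0, h1⟩
    | succ p ih =>
      obtain ⟨hpos, hle⟩ := ih
      rw [hrec]
      refine ⟨mul_pos (pow_pos (by linarith) 2) hpos, ?_⟩
      have h : 0 ≤ (1 - x p) ^ 2 * (4 - x p) := mul_nonneg (sq_nonneg _) (by linarith)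
      linarith
  have hmono : Monotone x := by
    refine monotone_nat_of_le_succ fun p => ?_
    obtain ⟨hpos, hle⟩ := hmem p
    rw [hrec]
    have h : 0 ≤ x p * (1 - x p) * (5 - x p) :=
      mul_nonneg (mul_nonneg hpos.le (by linarith)) (by linarith)
    linarith
  refine ⟨hmono, hmem, ?_⟩
  have hbdd : BddAbove (Set.range x) := ⟨1, by rintro _ ⟨p, rfl⟩; exact (hmem p).2⟩
  obtain ⟨L, hL⟩ : ∃ L, Filter.Tendsto x Filter.atTop (nhds L) :=
    ⟨_, tendsto_atTop_ciSup hmono hbdd⟩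
  have hLpos : 0 < L := h0.trans_le (hmono.ge_of_tendsto hL 0)
  have hLle : L ≤ 1 := le_of_tendsto' hL fun p => (hmem p).2
  have hfix : L = ((3 - L) / 2) ^ 2 * L := by
    refine tendsto_nhds_unique ((Filter.tendsto_add_atTop_iff_nat 1).2 hL) ?_
    simp only [hrec]
    exact (((hL.const_sub 3).div_const 2).pow 2).mul hL
  have hprod : L * (5 - L) * (1 - L) = 0 := by linarith
  have hne : L * (5 - L) ≠ 0 := (mul_pos hLpos (by linarith)).ne'
  have hL1 : L = 1 := by linarith [(mul_eq_zero.1 hprod).resolve_left hne]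
  exact hL1 ▸ hL
end

section
/- Let x : ℕ → ℝ satisfy 0 < x_0 ≤ 1 and x_{p+1} = ((3 − x_p)/2)² · x_p for all p, and define q : ℕ → ℝ by q_0 = 1 and q_{p+1} = q_p · (3 − x_p)/2. Then q_p > 0 for all p, x_p = q_p² · x_0 for all p, and q_p converges to x_0^{−1/2} as p → ∞. -/
/-- The map `t ↦ ((3 − t)/2)² · t` sends `(0, 1]` into itself. -/
lemma schurNewton_mem_Ioc {t : ℝ} (ht : t ∈ Set.Ioc (0 : ℝ) 1) :
    ((3 - t) / 2) ^ 2 * t ∈ Set.Ioc (0 : ℝ) 1 := by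
  obtain ⟨hpos, hle⟩ := ht
  have hfac : 0 < (3 - t) / 2 := by linarith
  refine ⟨by positivity, ?_⟩
  have hgap : 0 ≤ (1 - t) ^ 2 * (4 - t) := mul_nonneg (sq_nonneg _) (by linarith)
  linarith [show 1 - ((3 - t) / 2) ^ 2 * t = (1 - t) ^ 2 * (4 - t) / 4 by ring]

lemma le_schurNewton {t : ℝ} (ht : t ∈ Set.Ioc (0 : ℝ) 1) : t ≤ ((3 - t) / 2) ^ 2 * t :=
  le_mul_of_one_le_left ht.1.le (one_le_pow₀ (by linarith [ht.2]))

lemma eq_one_of_schurNewton_eq_self {t : ℝ} (ht : t ∈ Set.Ioc (0 : ℝ) 1)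
    (hfix : ((3 - t) / 2) ^ 2 * t = t) : t = 1 := by
  have hsq : ((3 - t) / 2) ^ 2 = 1 := mul_right_cancel₀ ht.1.ne' (by rw [hfix, one_mul])
  nlinarith [ht.2]

lemma schurNewton_iterate_mem_Ioc {x : ℕ → ℝ} (h0 : x 0 ∈ Set.Ioc (0 : ℝ) 1)
    (hrec : ∀ p, x (p + 1) = ((3 - x p) / 2) ^ 2 * x p) (p : ℕ) :
    x p ∈ Set.Ioc (0 : ℝ) 1 := by
  induction p with
  | zero => exact h0
  | succ p ih => exact hrec p ▸ schurNewton_mem_Ioc ih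

lemma tendsto_schurNewton_one {x : ℕ → ℝ} (h0 : x 0 ∈ Set.Ioc (0 : ℝ) 1)
    (hrec : ∀ p, x (p + 1) = ((3 - x p) / 2) ^ 2 * x p) :
    Filter.Tendsto x Filter.atTop (nhds 1) := by
  have hmem := schurNewton_iterate_mem_Ioc h0 hrec
  have hmono : Monotone x :=
    monotone_nat_of_le_succ fun p => hrec p ▸ le_schurNewton (hmem p)
  have hbdd : BddAbove (Set.range x) := ⟨1, by rintro _ ⟨p, rfl⟩; exact (hmem p).2⟩
  have hlim := tendsto_atTop_ciSup hmono hbdd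
  have hlim_mem : (⨆ p, x p) ∈ Set.Ioc (0 : ℝ) 1 :=
    ⟨h0.1.trans_le (le_ciSup hbdd 0), ciSup_le fun p => (hmem p).2⟩
  have hstep := (((hlim.const_sub 3).div_const 2).pow 2).mul hlim
  simp only [← hrec] at hstep
  have hfix := tendsto_nhds_unique hstep (hlim.comp (Filter.tendsto_add_atTop_nat 1))
  rwa [eq_one_of_schurNewton_eq_self hlim_mem hfix] at hlim

/-- For the coupled scalar Schur–Newton iteration
`x_{p+1} = ((3 − x_p)/2)² · x_p` with `x₀ ∈ (0, 1]` and `q₀ = 1`,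
`q_{p+1} = q_p · (3 − x_p)/2`, one has `q_p > 0`, `x_p = q_p² · x₀` for all `p`,
and `q_p → x₀^{-1/2}`. -/
theorem scalar_schur_newton_inverse_sqrt
    (x q : ℕ → ℝ) (h0 : 0 < x 0) (h1 : x 0 ≤ 1)
    (hrec : ∀ p, x (p + 1) = ((3 - x p) / 2) ^ 2 * x p)
    (hq0 : q 0 = 1) (hqrec : ∀ p, q (p + 1) = q p * (3 - x p) / 2) :
    (∀ p, 0 < q p) ∧ (∀ p, x p = q p ^ 2 * x 0) ∧
      Filter.Tendsto q Filter.atTop (nhds (Real.sqrt (x 0))⁻¹) := by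
  have hmem := schurNewton_iterate_mem_Ioc ⟨h0, h1⟩ hrec
  have hqpos : ∀ p, 0 < q p := by
    intro p
    induction p with
    | zero => rw [hq0]; exact one_pos
    | succ p ih =>
      rw [hqrec]
      have hfac : 0 < 3 - x p := by linarith [(hmem p).2]
      positivity
  have hxq : ∀ p, x p = q p ^ 2 * x 0 := by
    intro p
    induction p with
    | zero => rw [hq0]; ring
    | succ p ih =>
      calc x (p + 1) = ((3 - x p) / 2) ^ 2 * x p := hrec p
        _ = ((3 - x p) / 2) ^ 2 * (q p ^ 2 * x 0) := by rw [← ih]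
        _ = q (p + 1) ^ 2 * x 0 := by rw [hqrec]; ring
  refine ⟨hqpos, hxq, ?_⟩
  have hq : q = fun p => Real.sqrt (x p / x 0) := by
    funext p
    rw [hxq p, mul_div_cancel_right₀ _ h0.ne', Real.sqrt_sq (hqpos p).le]
  rw [hq, ← Real.sqrt_inv, ← one_div]
  exact ((tendsto_schurNewton_one ⟨h0, h1⟩ hrec).div_const (x 0)).sqrt
end
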